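/- arXiv:math/0608649 — 2 statements merged into one kernel-verified Lean document; each statement's English description precedes it below -/
import Mathlib

section
/- Let p be an odd prime, let q ∈ ℚ_p satisfy |q - 1|_p < 1 with q ≠ 1, let m be a nonnegative integer, and let n be an even positive integer. Then q^n · lim_{N→∞} (1/[p^N]_{-q}) Σ_{x=0}^{p^N - 1} [x+n]_q^m (-q)^x − lim_{N→∞} (1/[p^N]_{-q}) Σ_{x=0}^{p^N - 1} [x]_q^m (-q)^x = (1+q) · Σ_{l=0}^{n-1} (-1)^{l-1} q^l [l]_q^m, both limits existing in ℚ_p. -/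
open Filter

open Finset Topology

/-!
Since `p` is odd and `q ^ (p ^ N) → 1`, the summand `g x = f x * (-q) ^ x` satisfies
`g (x + p ^ N) ≈ -g x`, uniformly in `x`, as soon as `f` is `p`-adically continuous. Of the `p`
consecutive blocks of length `p ^ N` in the sum of length `p ^ (N + 1)`, all but the first therefore
cancel in pairs up to a small error. Successive unnormalised sums thus become close, which in the
ultrametric setting makes them a Cauchy sequence. Shifting `g` by `n` changes the sum of length
`p ^ N` by `∑_{l < n} (g (l + p ^ N) - g l) → -2 ∑_{l < n} g l`, while the normalising factor
`1 / [p ^ N]_{-q}` tends to `(1 + q) / 2`.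
-/

section PrincipalUnits

variable {R : Type*} [SeminormedRing R] [NormOneClass R]

lemma norm_pow_le_one {a : R} (ha : ‖a‖ ≤ 1) (n : ℕ) : ‖a ^ n‖ ≤ 1 :=
  (norm_pow_le a n).trans (pow_le_one₀ (norm_nonneg a) ha)

variable [IsUltrametricDist R]

lemma norm_le_one_of_norm_sub_one_le_one {a : R} (ha : ‖a - 1‖ ≤ 1) : ‖a‖ ≤ 1 := by
  simpa [ha] using IsUltrametricDist.norm_add_one_le_max_norm_one (a - 1)

lemma norm_pow_sub_pow_le {a b : R} (hab : Commute a b) (ha : ‖a‖ ≤ 1) (hb : ‖b‖ ≤ 1)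
    (n : ℕ) : ‖a ^ n - b ^ n‖ ≤ ‖a - b‖ := by
  rw [← hab.mul_geom_sum₂]
  refine (norm_mul_le _ _).trans (mul_le_of_le_one_right (norm_nonneg _) ?_)
  refine IsUltrametricDist.norm_sum_le_of_forall_le_of_nonneg zero_le_one fun i _ ↦ ?_
  exact (norm_mul_le _ _).trans
    (mul_le_one₀ (norm_pow_le_one ha i) (norm_nonneg _) (norm_pow_le_one hb _))

lemma norm_pow_sub_one_le {a : R} (ha : ‖a‖ ≤ 1) (n : ℕ) : ‖a ^ n - 1‖ ≤ ‖a - 1‖ := by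
  simpa using norm_pow_sub_pow_le (Commute.one_right a) ha norm_one.le n

lemma norm_pow_sub_one_le_mul_max {a : R} (ha : ‖a‖ ≤ 1) (n : ℕ) :
    ‖a ^ n - 1‖ ≤ ‖a - 1‖ * max ‖a - 1‖ ‖(n : R)‖ := by
  rw [← mul_geom_sum]
  refine (norm_mul_le _ _).trans (mul_le_mul_of_nonneg_left ?_ (norm_nonneg _))
  have hsum : ∑ i ∈ range n, a ^ i = ∑ i ∈ range n, (a ^ i - 1) + n := by simp
  rw [hsum]
  refine (IsUltrametricDist.norm_add_le_max _ _).trans (max_le_max_right _ ?_)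
  exact IsUltrametricDist.norm_sum_le_of_forall_le_of_nonneg (norm_nonneg _)
    fun i _ ↦ norm_pow_sub_one_le ha i

lemma tendsto_pow_pow_of_norm_sub_one_lt {p : ℕ} (hp : ‖(p : R)‖ < 1) {q : R}
    (hq : ‖q - 1‖ < 1) : Tendsto (fun N : ℕ ↦ q ^ p ^ N) atTop (𝓝 1) := by
  have hq' : ‖q‖ ≤ 1 := norm_le_one_of_norm_sub_one_le_one hq.le
  set c := max ‖q - 1‖ ‖(p : R)‖
  have hbound (N : ℕ) : ‖q ^ p ^ N - 1‖ ≤ c ^ N := by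
    induction N with
    | zero => simpa using hq.le
    | succ N ih =>
      rw [pow_succ p, pow_mul, pow_succ c]
      refine (norm_pow_sub_one_le_mul_max (norm_pow_le_one hq' _) p).trans ?_
      gcongr
      exact max_le_max_right _ (norm_pow_sub_one_le hq' _)
  rw [tendsto_iff_norm_sub_tendsto_zero]
  exact squeeze_zero (fun _ ↦ norm_nonneg _) hbound
    (tendsto_pow_atTop_nhds_zero_of_lt_one (by positivity) (max_lt hq hp))

end PrincipalUnits

section ShiftedSums

variable {G : Type*} [AddCommGroup G]

lemma sum_range_shift_sub_sum_range (g : ℕ → G) (n M : ℕ) :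
    ∑ x ∈ range M, g (x + n) - ∑ x ∈ range M, g x = ∑ l ∈ range n, (g (l + M) - g l) := by
  have hsplit : ∑ x ∈ range n, g x + ∑ x ∈ range M, g (x + n) =
      ∑ x ∈ range M, g x + ∑ l ∈ range n, g (l + M) := by
    simp only [add_comm _ n, add_comm _ M]
    rw [← sum_range_add, ← sum_range_add, add_comm]
  rw [sum_sub_distrib, sub_eq_sub_iff_add_eq_add, add_comm, hsplit, add_comm]

lemma tendsto_sum_range_shift_sub_sum_range [TopologicalSpace G] [IsTopologicalAddGroup G]
    {ι : Type*} {F : Filter ι} {u : ι → ℕ} {g h : ℕ → G}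
    (hg : ∀ x, Tendsto (fun i ↦ g (x + u i)) F (𝓝 (h x))) (n : ℕ) :
    Tendsto (fun i ↦ ∑ x ∈ range (u i), g (x + n) - ∑ x ∈ range (u i), g x) F
      (𝓝 (∑ l ∈ range n, (h l - g l))) := by
  simp only [sum_range_shift_sub_sum_range]
  exact tendsto_finsetSum _ fun l _ ↦ (hg l).sub_const _

end ShiftedSums

section ApproximatelyPeriodic

variable {E : Type*} [SeminormedAddCommGroup E] [IsUltrametricDist E] {p : ℕ}

lemma norm_sum_range_mul_sub_le_of_odd {g : ℕ → E} {M : ℕ} {ε : ℝ} (hε : 0 ≤ ε)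
    (hg : ∀ x, ‖g (x + M) + g x‖ ≤ ε) {k : ℕ} (hk : Odd k) :
    ‖∑ x ∈ range (M * k), g x - ∑ x ∈ range M, g x‖ ≤ ε := by
  obtain ⟨r, rfl⟩ := hk
  induction r with
  | zero => simpa using hε
  | succ r ih =>
    set L := M * (2 * r + 1) with hL
    have hpair : ∑ x ∈ range (M * (2 * (r + 1) + 1)), g x - ∑ x ∈ range M, g x =
        (∑ x ∈ range L, g x - ∑ x ∈ range M, g x) +
          ∑ x ∈ range M, (g (L + x + M) + g (L + x)) := by
      rw [show M * (2 * (r + 1) + 1) = L + M + M by rw [hL]; ring, sum_range_add, sum_range_add,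
        sum_add_distrib]
      simp only [add_right_comm L _ M]
      abel
    rw [hpair]
    refine (IsUltrametricDist.norm_add_le_max _ _).trans (max_le ih ?_)
    exact IsUltrametricDist.norm_sum_le_of_forall_le_of_nonneg hε fun x _ ↦ hg _

lemma exists_tendsto_sum_range_pow [CompleteSpace E] (hodd : Odd p) {g : ℕ → E}
    (hg : TendstoUniformly (fun N x ↦ g (x + p ^ N)) (-g) atTop) :
    ∃ L, Tendsto (fun N ↦ ∑ x ∈ range (p ^ N), g x) atTop (𝓝 L) := by
  refine cauchySeq_tendsto_of_complete
    (NonarchimedeanAddGroup.cauchySeq_of_tendsto_sub_nhds_zero ?_)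
  rw [Metric.tendsto_nhds]
  intro ε hε
  filter_upwards [Metric.tendstoUniformly_iff.1 hg (ε / 2) (half_pos hε)] with N hN
  have hstep (x : ℕ) : ‖g (x + p ^ N) + g x‖ ≤ ε / 2 := by
    simpa [dist_eq_norm'] using (hN x).le
  rw [dist_zero_right, pow_succ]
  exact (norm_sum_range_mul_sub_le_of_odd (half_pos hε).le hstep hodd).trans_lt (half_lt_self hε)

lemma exists_norm_le_of_norm_add_sub_le {f : ℕ → E} {M : ℕ} {C : ℝ} (hM : 0 < M)
    (hf : ∀ x, ‖f (x + M) - f x‖ ≤ C) : ∃ B, ∀ x, ‖f x‖ ≤ B := by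
  refine ⟨max C (∑ i ∈ range M, ‖f i‖), fun x ↦ ?_⟩
  induction x using Nat.strong_induction_on with
  | _ x ih =>
    rcases lt_or_ge x M with hx | hx
    · exact le_max_of_le_right
        (single_le_sum (f := fun i ↦ ‖f i‖) (fun _ _ ↦ norm_nonneg _) (mem_range.2 hx))
    · obtain ⟨y, rfl⟩ := Nat.exists_eq_add_of_le' hx
      rw [← sub_add_cancel (f (y + M)) (f y)]
      exact (IsUltrametricDist.norm_add_le_max _ _).trans
        (max_le (le_max_of_le_left (hf y)) (ih y (by lia)))

end ApproximatelyPeriodic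

section FermionicIntegral

variable {K : Type*} [NormedField K] {p : ℕ} {q : K} {f : ℕ → K}

/-- The Riemann sum `(1 / [M]_{-q}) ∑_{x < M} f x (-q) ^ x`. Its limit along `M = p ^ N` is the
fermionic `p`-adic `q`-integral `I_{-q}(f)`. The function `f` is only given on `ℕ`; for
complete `K` it extends continuously to `ℤ_p` if and only if `f (x + p ^ N) → f x` as `N → ∞`,
uniformly in `x`. -/
noncomputable def fermionicSum (q : K) (f : ℕ → K) (M : ℕ) : K :=
  1 / ((1 - (-q) ^ M) / (1 + q)) * ∑ x ∈ range M, f x * (-q) ^ x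

lemma two_ne_zero_of_odd_of_norm_lt_one (hodd : Odd p) (hp : ‖(p : K)‖ < 1) : (2 : K) ≠ 0 := by
  intro h
  obtain ⟨r, rfl⟩ := hodd
  simp [h] at hp

lemma tendsto_fermionicSum_pow [IsUltrametricDist K] (hodd : Odd p) (hp : ‖(p : K)‖ < 1)
    (hq : ‖q - 1‖ < 1) {L : K}
    (hL : Tendsto (fun N ↦ ∑ x ∈ range (p ^ N), f x * (-q) ^ x) atTop (𝓝 L)) :
    Tendsto (fun N ↦ fermionicSum q f (p ^ N)) atTop (𝓝 ((1 + q) / 2 * L)) := by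
  refine Tendsto.mul ?_ hL
  have hden : Tendsto (fun N ↦ 1 - (-q) ^ p ^ N) atTop (𝓝 2) := by
    simpa [hodd.pow.neg_pow, one_add_one_eq_two] using
      (tendsto_pow_pow_of_norm_sub_one_lt hp hq).const_add 1
  simp only [one_div_div]
  exact tendsto_const_nhds.div hden (two_ne_zero_of_odd_of_norm_lt_one hodd hp)

variable [IsUltrametricDist K]

lemma tendstoUniformly_mul_neg_pow (hodd : Odd p) (hp : ‖(p : K)‖ < 1) (hq : ‖q - 1‖ < 1)
    (hf : TendstoUniformly (fun N x ↦ f (x + p ^ N)) f atTop) :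
    TendstoUniformly (fun N x ↦ f (x + p ^ N) * (-q) ^ (x + p ^ N))
      (-fun x ↦ f x * (-q) ^ x) atTop := by
  have hq' : ‖q‖ ≤ 1 := norm_le_one_of_norm_sub_one_le_one hq.le
  obtain ⟨B, hB⟩ : ∃ B, ∀ x, ‖f x‖ ≤ B := by
    obtain ⟨N, hN⟩ := (Metric.tendstoUniformly_iff.1 hf 1 one_pos).exists
    exact exists_norm_le_of_norm_add_sub_le (pow_pos hodd.pos N)
      fun x ↦ by simpa [dist_eq_norm'] using (hN x).le
  have hsmall : Tendsto (fun N ↦ B * ‖1 - q ^ p ^ N‖) atTop (𝓝 0) := by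
    simpa using ((tendsto_pow_pow_of_norm_sub_one_lt hp hq).const_sub 1).norm.const_mul B
  rw [Metric.tendstoUniformly_iff] at hf ⊢
  intro ε hε
  filter_upwards [hf ε hε, hsmall.eventually_lt_const hε] with N hfN hqN x
  have hfactor : f (x + p ^ N) * (-q) ^ (x + p ^ N) - (-fun x ↦ f x * (-q) ^ x) x =
      (-q) ^ x * ((f x - f (x + p ^ N)) + f (x + p ^ N) * (1 - q ^ p ^ N)) := by
    rw [pow_add, hodd.pow.neg_pow, Pi.neg_apply]
    ring
  rw [dist_eq_norm', hfactor, norm_mul]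
  refine (mul_le_of_le_one_left (norm_nonneg _)
    (norm_pow_le_one ((norm_neg q).trans_le hq') x)).trans_lt ?_
  refine (IsUltrametricDist.norm_add_le_max _ _).trans_lt (max_lt ?_ ?_)
  · simpa [dist_eq_norm] using hfN x
  · rw [norm_mul]
    exact (mul_le_mul_of_nonneg_right (hB _) (norm_nonneg _)).trans_lt hqN

lemma exists_tendsto_sum_mul_neg_pow [CompleteSpace K] (hodd : Odd p) (hp : ‖(p : K)‖ < 1)
    (hq : ‖q - 1‖ < 1) (hf : TendstoUniformly (fun N x ↦ f (x + p ^ N)) f atTop) :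
    ∃ L, Tendsto (fun N ↦ ∑ x ∈ range (p ^ N), f x * (-q) ^ x) atTop (𝓝 L) :=
  exists_tendsto_sum_range_pow hodd (tendstoUniformly_mul_neg_pow hodd hp hq hf)

lemma neg_pow_mul_sub_eq_of_tendsto_sum (hodd : Odd p) (hp : ‖(p : K)‖ < 1) (hq : ‖q - 1‖ < 1)
    (hf : TendstoUniformly (fun N x ↦ f (x + p ^ N)) f atTop) {n : ℕ} {A B : K}
    (hA : Tendsto (fun N ↦ ∑ x ∈ range (p ^ N), f (x + n) * (-q) ^ x) atTop (𝓝 A))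
    (hB : Tendsto (fun N ↦ ∑ x ∈ range (p ^ N), f x * (-q) ^ x) atTop (𝓝 B)) :
    (-q) ^ n * A - B = 2 * ∑ l ∈ range n, (-1 : K) ^ (l - 1 : ℤ) * q ^ l * f l := by
  have hanti (x : ℕ) : Tendsto (fun N ↦ f (x + p ^ N) * (-q) ^ (x + p ^ N)) atTop
      (𝓝 (-(f x * (-q) ^ x))) :=
    (tendstoUniformly_mul_neg_pow hodd hp hq hf).tendsto_at x
  have hdiff := tendsto_sum_range_shift_sub_sum_range (g := fun x ↦ f x * (-q) ^ x) hanti n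
  have hshift (N : ℕ) : ∑ x ∈ range (p ^ N), f (x + n) * (-q) ^ (x + n) =
      (-q) ^ n * ∑ x ∈ range (p ^ N), f (x + n) * (-q) ^ x := by
    rw [mul_sum]
    exact sum_congr rfl fun x _ ↦ by ring
  simp only [hshift] at hdiff
  rw [tendsto_nhds_unique ((hA.const_mul _).sub hB) hdiff, mul_sum]
  refine sum_congr rfl fun l _ ↦ ?_
  rw [zpow_sub_one₀ (by simp), zpow_natCast, neg_pow q]
  ring

lemma tendstoUniformly_qNumber_pow (hp : ‖(p : K)‖ < 1) (hq : ‖q - 1‖ < 1) (m : ℕ) :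
    TendstoUniformly (fun N x ↦ ((1 - q ^ (x + p ^ N)) / (1 - q)) ^ m)
      (fun x ↦ ((1 - q ^ x) / (1 - q)) ^ m) atTop := by
  have hq' : ‖q‖ ≤ 1 := norm_le_one_of_norm_sub_one_le_one hq.le
  have hle (x : ℕ) : ‖(1 - q ^ x) / (1 - q)‖ ≤ 1 := by
    rw [norm_div, norm_sub_rev, norm_sub_rev 1 q]
    exact div_le_one_of_le₀ (norm_pow_sub_one_le hq' x) (norm_nonneg _)
  have hsmall : Tendsto (fun N ↦ ‖(1 - q ^ p ^ N) / (1 - q)‖) atTop (𝓝 0) := by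
    simpa using (((tendsto_pow_pow_of_norm_sub_one_lt hp hq).const_sub 1).div_const (1 - q)).norm
  rw [Metric.tendstoUniformly_iff]
  intro ε hε
  filter_upwards [hsmall.eventually_lt_const hε] with N hN x
  calc dist (((1 - q ^ x) / (1 - q)) ^ m) (((1 - q ^ (x + p ^ N)) / (1 - q)) ^ m)
      ≤ ‖(1 - q ^ (x + p ^ N)) / (1 - q) - (1 - q ^ x) / (1 - q)‖ := by
        rw [dist_eq_norm']
        exact norm_pow_sub_pow_le (Commute.all _ _) (hle _) (hle _) m
    _ = ‖q ^ x * ((1 - q ^ p ^ N) / (1 - q))‖ := by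
        rw [pow_add]
        congr 1
        ring
    _ ≤ ‖(1 - q ^ p ^ N) / (1 - q)‖ := by
        rw [norm_mul]
        exact mul_le_of_le_one_left (norm_nonneg _) (norm_pow_le_one hq' x)
    _ < ε := hN

theorem stmt_14_general [CompleteSpace K] (hodd : Odd p) (hp : ‖(p : K)‖ < 1)
    (hq : ‖q - 1‖ < 1) (hf : TendstoUniformly (fun N x ↦ f (x + p ^ N)) f atTop) (n : ℕ) :
    ∃ A B : K,
      Tendsto (fun N ↦ fermionicSum q (fun x ↦ f (x + n)) (p ^ N)) atTop (𝓝 A) ∧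
      Tendsto (fun N ↦ fermionicSum q f (p ^ N)) atTop (𝓝 B) ∧
      (-q) ^ n * A - B =
        (1 + q) * ∑ l ∈ range n, (-1 : K) ^ (l - 1 : ℤ) * q ^ l * f l := by
  have hfn : TendstoUniformly (fun N x ↦ f (x + p ^ N + n)) (fun x ↦ f (x + n)) atTop := by
    simpa only [Function.comp_def, add_right_comm _ n] using hf.comp (· + n)
  obtain ⟨A, hA⟩ := exists_tendsto_sum_mul_neg_pow hodd hp hq hfn
  obtain ⟨B, hB⟩ := exists_tendsto_sum_mul_neg_pow hodd hp hq hf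
  refine ⟨_, _, tendsto_fermionicSum_pow hodd hp hq hA, tendsto_fermionicSum_pow hodd hp hq hB, ?_⟩
  have htwo : (2 : K) ≠ 0 := two_ne_zero_of_odd_of_norm_lt_one hodd hp
  calc (-q) ^ n * ((1 + q) / 2 * A) - (1 + q) / 2 * B
      = (1 + q) / 2 * ((-q) ^ n * A - B) := by ring
    _ = (1 + q) * ∑ l ∈ range n, (-1 : K) ^ (l - 1 : ℤ) * q ^ l * f l := by
      rw [neg_pow_mul_sub_eq_of_tendsto_sum hodd hp hq hf hA hB, ← mul_assoc,
        div_mul_cancel₀ _ htwo]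

end FermionicIntegral

/-- Let `p` be an odd prime, `q ∈ ℚ_p` with `|q-1|_p < 1`, `q ≠ 1`, `m : ℕ`,
and `n` an even positive integer. Then both `p`-adic `q`-integral limits exist, and
`q^n · I_{-q}([x+n]_q^m) - I_{-q}([x]_q^m) = (1+q) · Σ_{l=0}^{n-1} (-1)^{l-1} q^l [l]_q^m`. -/
theorem stmt_14 (p : ℕ) [Fact p.Prime] (hodd : Odd p)
    (q : ℚ_[p]) (hq1 : ‖q - 1‖ < 1) (hq : q ≠ 1)
    (m n : ℕ) (hn : 0 < n) (hneven : Even n) :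
    ∃ A B : ℚ_[p],
      Tendsto (fun N : ℕ =>
          (1 / ((1 - (-q) ^ (p ^ N)) / (1 + q))) *
            ∑ x ∈ Finset.range (p ^ N), ((1 - q ^ (x + n)) / (1 - q)) ^ m * (-q) ^ x)
        atTop (nhds A) ∧
      Tendsto (fun N : ℕ =>
          (1 / ((1 - (-q) ^ (p ^ N)) / (1 + q))) *
            ∑ x ∈ Finset.range (p ^ N), ((1 - q ^ x) / (1 - q)) ^ m * (-q) ^ x)
        atTop (nhds B) ∧
      q ^ n * A - B =
        (1 + q) * ∑ l ∈ Finset.range n,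
          (-1 : ℚ_[p]) ^ (l - 1 : ℤ) * q ^ l * ((1 - q ^ l) / (1 - q)) ^ m := by
  simpa only [fermionicSum, hneven.neg_pow] using stmt_14_general hodd Padic.norm_p_lt_one hq1
    (tendstoUniformly_qNumber_pow Padic.norm_p_lt_one hq1 m) n
end

section
/- Let p be an odd prime, let q ∈ ℚ_p satisfy |q - 1|_p < 1 with q ≠ 1, and define E_{n,q}(x) = (1+q) · (1/(1-q))^n · Σ_{l=0}^n C(n,l) (-1)^l q^{l·x} / (1 + q^{l+1}) for nonnegative integers n and x, and E_{n,q} = E_{n,q}(0). Then for every nonnegative integer m and every even positive integer n: q^n E_{m,q}(n) − E_{m,q} = (1+q) · Σ_{l=0}^{n-1} (-1)^{l-1} q^l [l]_q^m. -/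
/-!
In `q * E_{m,q}(x + 1) + E_{m,q}(x)` the denominators `1 + q ^ (l + 1)` cancel, leaving the
binomial expansion of `(1 - q ^ x) ^ m`, so it equals `(1 + q) * [x]_q ^ m`. Multiplied by
`-(-q) ^ x`, it becomes the increment of `(-q) ^ x * E_{m,q}(x)`, and the sum telescopes.

The denominators do not vanish: `q ^ k` is in the open unit ball around `1`, which does not
contain `-1` because `2` is a `p`-adic unit.
-/

section Ultrametric

variable {R : Type*} [SeminormedRing R] [IsUltrametricDist R] {a : R}

lemma norm_pow_sub_one_lt_one (ha : ‖a - 1‖ < 1) (k : ℕ) : ‖a ^ k - 1‖ < 1 := by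
  induction k with
  | zero => simp
  | succ k ih =>
    have hmul : ‖(a ^ k - 1) * (a - 1)‖ < 1 :=
      (norm_mul_le _ _).trans_lt (mul_lt_one_of_nonneg_of_lt_one_left (norm_nonneg _) ih ha.le)
    have hsplit : a ^ (k + 1) - 1 = (a ^ k - 1) * (a - 1) + (a ^ k - 1) + (a - 1) := by
      rw [pow_succ]
      noncomm_ring
    rw [hsplit]
    exact (IsUltrametricDist.norm_add_le_max _ _).trans_lt
      (max_lt ((IsUltrametricDist.norm_add_le_max _ _).trans_lt (max_lt hmul ih)) ha)

lemma one_add_pow_ne_zero_of_norm_sub_one_lt_one (h2 : 1 ≤ ‖(2 : R)‖) (ha : ‖a - 1‖ < 1) (k : ℕ) :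
    1 + a ^ k ≠ 0 := by
  intro h
  have hpow : a ^ k - 1 = -2 := by rw [eq_neg_of_add_eq_zero_right h]; norm_num
  have hlt := norm_pow_sub_one_lt_one ha k
  rw [hpow, norm_neg] at hlt
  exact hlt.not_ge h2

end Ultrametric

lemma norm_two_padic_of_odd {p : ℕ} [Fact p.Prime] (hp : Odd p) : ‖(2 : ℚ_[p])‖ = 1 := by
  exact_mod_cast Padic.norm_natCast_eq_one_iff.2 (Nat.coprime_two_right.2 hp)

lemma sum_range_pow_mul_mul_sub {R : Type*} [Ring R] (a : R) (f : ℕ → R) (n : ℕ) :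
    ∑ x ∈ Finset.range n, a ^ x * (a * f (x + 1) - f x) = a ^ n * f n - f 0 := by
  simpa only [mul_sub, ← mul_assoc, ← pow_succ, pow_zero, one_mul] using
    Finset.sum_range_sub (fun x => a ^ x * f x) n

lemma one_sub_pow_eq_sum {R : Type*} [CommRing R] (a : R) (m : ℕ) :
    (1 - a) ^ m = ∑ l ∈ Finset.range (m + 1), (m.choose l : R) * (-1) ^ l * a ^ l := by
  rw [sub_eq_neg_add, add_pow]
  refine Finset.sum_congr rfl fun l _ => ?_
  rw [neg_pow a, one_pow]
  ring

section QEuler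

variable {K : Type*} [Field K] {q : K} {m : ℕ}

/-- The unnormalised `q`-Euler polynomial `(1 - q) ^ m E_{m,q}(x) / (1 + q)` at a natural number
`x`; its recurrence involves no division by `1 - q`. -/
def qEulerSum (q : K) (m x : ℕ) : K :=
  ∑ l ∈ Finset.range (m + 1), (m.choose l : K) * (-1) ^ l * q ^ (l * x) / (1 + q ^ (l + 1))

/-- The value `E_{m,q}(x)` of the `q`-Euler polynomial at a natural number `x`; the `q`-Euler
number `E_{m,q}` is `qEuler q m 0`. -/
def qEuler (q : K) (m x : ℕ) : K :=
  (1 + q) * (1 / (1 - q)) ^ m * qEulerSum q m x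

lemma mul_qEulerSum_succ_add_qEulerSum (hden : ∀ l ≤ m, 1 + q ^ (l + 1) ≠ 0) (x : ℕ) :
    q * qEulerSum q m (x + 1) + qEulerSum q m x = (1 - q ^ x) ^ m := by
  rw [one_sub_pow_eq_sum, qEulerSum, qEulerSum, Finset.mul_sum, ← Finset.sum_add_distrib]
  refine Finset.sum_congr rfl fun l hl => ?_
  have hl_den := hden l (Finset.mem_range_succ_iff.1 hl)
  field_simp
  ring

lemma neg_pow_mul_qEulerSum_sub (hden : ∀ l ≤ m, 1 + q ^ (l + 1) ≠ 0) (n : ℕ) :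
    (-q) ^ n * qEulerSum q m n - qEulerSum q m 0 =
      ∑ l ∈ Finset.range n, (-1 : K) ^ (l - 1 : ℤ) * q ^ l * (1 - q ^ l) ^ m := by
  rw [← sum_range_pow_mul_mul_sub]
  refine Finset.sum_congr rfl fun l _ => ?_
  have hsign : (-1 : K) ^ (l - 1 : ℤ) = -(-1) ^ l := by
    rw [zpow_sub_one₀ (neg_ne_zero.2 one_ne_zero), zpow_natCast, inv_neg_one, mul_neg_one]
  rw [hsign, ← mul_qEulerSum_succ_add_qEulerSum hden, neg_pow]
  ring

theorem stmt_16_general (hq : q ≠ 1) (hden : ∀ l ≤ m, 1 + q ^ (l + 1) ≠ 0) (n : ℕ) :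
    (-q) ^ n * qEuler q m n - qEuler q m 0 =
      (1 + q) * ∑ l ∈ Finset.range n,
        (-1 : K) ^ (l - 1 : ℤ) * q ^ l * ((1 - q ^ l) / (1 - q)) ^ m := by
  simp only [qEuler, div_pow, one_pow, ← mul_div_assoc, ← Finset.sum_div,
    ← neg_pow_mul_qEulerSum_sub hden]
  field_simp [sub_ne_zero.2 hq.symm]

end QEuler

/-- Let `p` be an odd prime, `q ∈ ℚ_p` with `|q-1|_p < 1`, `q ≠ 1`, and define
`E_{n,q}(x) = (1+q) · (1/(1-q))^n · Σ_{l=0}^n C(n,l)(-1)^l q^{l·x}/(1+q^{l+1})` and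
`E_{n,q} = E_{n,q}(0)`. Then for every `m : ℕ` and every even positive integer `n`:
`q^n E_{m,q}(n) - E_{m,q} = (1+q) · Σ_{l=0}^{n-1} (-1)^{l-1} q^l [l]_q^m`. -/
theorem stmt_16 (p : ℕ) [Fact p.Prime] (hodd : Odd p)
    (q : ℚ_[p]) (hq1 : ‖q - 1‖ < 1) (hq : q ≠ 1)
    (E : ℕ → ℕ → ℚ_[p])
    (hE : ∀ k x : ℕ, E k x = (1 + q) * (1 / (1 - q)) ^ k *
      ∑ l ∈ Finset.range (k + 1), (k.choose l : ℚ_[p]) * (-1) ^ l * q ^ (l * x) / (1 + q ^ (l + 1)))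
    (m n : ℕ) (hn : 0 < n) (hneven : Even n) :
    q ^ n * E m n - E m 0 =
      (1 + q) * ∑ l ∈ Finset.range n,
        (-1 : ℚ_[p]) ^ (l - 1 : ℤ) * q ^ l * ((1 - q ^ l) / (1 - q)) ^ m := by
  obtain rfl : E = qEuler q := funext₂ hE
  have hden := one_add_pow_ne_zero_of_norm_sub_one_lt_one (norm_two_padic_of_odd hodd).ge hq1
  simpa only [hneven.neg_pow] using stmt_16_general hq (fun l _ => hden (l + 1)) n
end
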